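/- arXiv:1005.4277 — 2 statements merged into one kernel-verified Lean document; each statement's English description precedes it below -/
import Mathlib

section
/- Let a, b, c ∈ ℂ \ (1/2)ℤ with a+b−c ∈ {0,1,…,n−1}, and let u, v, t ∈ {0,…,n−1} be integers with u+v−t = a+b−c. Then C^{n−1−a, c, b}_{n−1−u, t, v} · ξ^{−a(n−1)} · ξ^{(n−1)u} = C^{c, n−1−b, a}_{t, n−1−v, u} · ξ^{−(n−1−b)(n−1)} · ξ^{(n−1)(n−1−v)}. -/
open Complex Finset Filter
open scoped Matrix Kronecker Real

noncomputable section

/-- `ξ^a = exp(π √-1 a / n)` for the `2n`-th root of unity `ξ = exp(π √-1/n)`. -/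
def xic (n : ℕ) (a : ℂ) : ℂ := Complex.exp (Real.pi * Complex.I * a / n)

/-- `{a} = ξ^a - ξ^{-a}`. -/
def qn (n : ℕ) (a : ℂ) : ℂ := xic n a - xic n (-a)

/-- `{k}! = {1}{2}⋯{k}`. -/
def qfac (n : ℕ) (k : ℕ) : ℂ := ∏ j ∈ Finset.range k, qn n ((j : ℂ) + 1)

-- The quantum binomial `[a¦b]`, defined (and nonzero) only when `a - b ∈ {0,1,…,n-1}`.
open Classical in
def qbin (n : ℕ) (a b : ℂ) : ℂ :=
  if h : ∃ k : ℕ, k < n ∧ a - b = (k : ℂ) then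
    ∏ j ∈ Finset.range h.choose, qn n (a - (j : ℂ)) / qn n (a - b - (j : ℂ))
  else 0

/-- `[a] = {a}/{1}`. -/
def qint (n : ℕ) (a : ℂ) : ℂ := qn n a / qn n 1

/-- `a` is not a half-integer. -/
def NotHalfInt (a : ℂ) : Prop := ∀ m : ℤ, a ≠ (m : ℂ) / 2

/-- `x ∈ {0, 1, …, n-1}` (as a complex number). -/
def InZn (n : ℕ) (x : ℂ) : Prop := ∃ k : ℕ, k < n ∧ x = (k : ℂ)

/-- The matrix of `E` on `V^a = ℂ^n`: `E e_j = [j] e_{j-1}` (independent of `a`). -/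
def Emat (n : ℕ) : Matrix (Fin n) (Fin n) ℂ :=
  Matrix.of fun i j => if (j : ℕ) = (i : ℕ) + 1 then qint n ((j : ℕ) : ℂ) else 0

/-- The matrix of `F` on `V^a`: `F e_j = [2a-j] e_{j+1}` (with `e_n = 0`). -/
def Fmat (n : ℕ) (a : ℂ) : Matrix (Fin n) (Fin n) ℂ :=
  Matrix.of fun i j => if (i : ℕ) = (j : ℕ) + 1 then qint n (2 * a - ((j : ℕ) : ℂ)) else 0

/-- The matrix of `K` on `V^a`: `K e_j = ξ^{a-j} e_j`. -/
def Kmat (n : ℕ) (a : ℂ) : Matrix (Fin n) (Fin n) ℂ :=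
  Matrix.of fun i j => if i = j then xic n (a - ((i : ℕ) : ℂ)) else 0

/-- The matrix of `K⁻¹` on `V^a`. -/
def Kinvmat (n : ℕ) (a : ℂ) : Matrix (Fin n) (Fin n) ℂ :=
  Matrix.of fun i j => if i = j then xic n (-(a - ((i : ℕ) : ℂ))) else 0

/-- The `R`-matrix `R_{a,b} : V^a ⊗ V^b → V^b ⊗ V^a`:
`R(e_u ⊗ e_v) = Σ_m {m}! ξ^{2(a-u)(b-v) - m(a-b-u+v) - m(m+1)/2} [u¦u-m] [2b-v¦2b-v-m]
e_{v+m} ⊗ e_{u-m}`; the entry at row `(h,k)`, column `(u,v)` is the coefficient of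
`e_h ⊗ e_k`, nonzero only when `h + k = u + v` and `h ≥ v` (with `m = h - v`). -/
def Rmat (n : ℕ) (a b : ℂ) : Matrix (Fin n × Fin n) (Fin n × Fin n) ℂ :=
  Matrix.of fun p q =>
    if ((p.1 : ℕ) + (p.2 : ℕ) = (q.1 : ℕ) + (q.2 : ℕ)) ∧ ((q.2 : ℕ) ≤ (p.1 : ℕ)) then
      (fun m : ℕ =>
        qfac n m *
        xic n (2 * (a - ((q.1 : ℕ) : ℂ)) * (b - ((q.2 : ℕ) : ℂ))
            - (m : ℂ) * (a - b - ((q.1 : ℕ) : ℂ) + ((q.2 : ℕ) : ℂ))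
            - (m : ℂ) * ((m : ℂ) + 1) / 2) *
        qbin n ((q.1 : ℕ) : ℂ) (((q.1 : ℕ) : ℂ) - (m : ℂ)) *
        qbin n (2 * b - ((q.2 : ℕ) : ℂ)) (2 * b - ((q.2 : ℕ) : ℂ) - (m : ℂ)))
      ((p.1 : ℕ) - (q.2 : ℕ))
    else 0

/-- The Clebsch-Gordan quantum coefficient `C^{a,b,c}_{u,v,t}`. -/
def CG (n : ℕ) (a b c : ℂ) (u v t : ℕ) : ℂ :=
  Complex.exp (Real.pi * Complex.I * (c - a - b) / 2) *
  (-1 : ℂ) ^ ((v : ℤ) - (t : ℤ)) *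
  xic n (((v : ℂ) * (2 * b - (v : ℂ) + 1) - (u : ℂ) * (2 * a - (u : ℂ) + 1)) / 2) *
  (qbin n (2 * c) (2 * c - (t : ℂ)))⁻¹ *
  qbin n (2 * c) (a + b + c - ((n : ℂ) - 1)) *
  ∑ z ∈ Finset.range (t + 1),
    (-1 : ℂ) ^ z * xic n ((2 * (z : ℂ) - (t : ℂ)) * (2 * c - (t : ℂ) + 1) / 2) *
    qbin n (a + b - c) ((u : ℂ) - (z : ℂ)) *
    qbin n (2 * a - (u : ℂ) + (z : ℂ)) (2 * a - (u : ℂ)) *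
    qbin n (2 * b - (v : ℂ) + ((t : ℂ) - (z : ℂ))) (2 * b - (v : ℂ))

-- The inclusion `Y_c^{a,b} : V^c → V^a ⊗ V^b`.
open Classical in
def Yinc (n : ℕ) (a b c : ℂ) : Matrix (Fin n × Fin n) (Fin n) ℂ :=
  Matrix.of fun p t =>
    if ((p.1 : ℕ) : ℂ) + ((p.2 : ℕ) : ℂ) - ((t : ℕ) : ℂ) = a + b - c then
      CG n a b c (p.1 : ℕ) (p.2 : ℕ) (t : ℕ)
    else 0

-- The projection `Y_{a,b}^c : V^a ⊗ V^b → V^c`.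
open Classical in
def Yproj (n : ℕ) (a b c : ℂ) : Matrix (Fin n) (Fin n × Fin n) ℂ :=
  Matrix.of fun t p =>
    if ((p.1 : ℕ) : ℂ) + ((p.2 : ℕ) : ℂ) - ((t : ℕ) : ℂ) = a + b - c then
      CG n ((n : ℂ) - 1 - b) ((n : ℂ) - 1 - a) ((n : ℂ) - 1 - c)
        (n - 1 - (p.2 : ℕ)) (n - 1 - (p.1 : ℕ)) (n - 1 - (t : ℕ))
    else 0

-- Extracts the natural number `k` with `x = k` (0 if there is none).
open Classical in
def natIdx (x : ℂ) : ℕ := if h : ∃ k : ℕ, x = (k : ℂ) then h.choose else 0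

/-- The `SL(2,ℂ)` quantum 6j-symbol `{a b e; d c f}_ξ`. -/
def sixj (n : ℕ) (a b e d c f : ℂ) : ℂ :=
  (-1 : ℂ) ^ (n - 1 + natIdx (a + f - c)) *
  (qbin n (2 * f + (n : ℂ)) (2 * f + 1))⁻¹ *
  (qfac n (natIdx (d + e - c)) * qfac n (natIdx (a + b - e)) /
    (qfac n (natIdx (b + d - f)) * qfac n (natIdx (a + f - c)))) *
  qbin n (2 * e) (a + b + e + 1 - (n : ℂ)) *
  (qbin n (2 * e) (e + c - d))⁻¹ *
  ∑ z ∈ Finset.Icc (natIdx (d + e - c) - natIdx (b + d - f))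
      (min (natIdx (d + e - c)) (natIdx (a + f - c))),
    (-1 : ℂ) ^ z * qbin n (a + f + c + 1) (2 * c + (z : ℂ) + 1) *
    qbin n ((a + c - f) + (z : ℂ)) (a + c - f) *
    qbin n ((b + f - d) + (d + e - c) - (z : ℂ)) (b + f - d) *
    qbin n ((d + c - e) + (z : ℂ)) (d + f - b)

/-- The tetrahedral symbol `{a b e; d c f}_tet = {a b e; d c f}_ξ · [2f+n¦2f+1]`. -/
def sixjtet (n : ℕ) (a b e d c f : ℂ) : ℂ :=
  sixj n a b e d c f * qbin n (2 * f + (n : ℂ)) (2 * f + 1)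

/-- The Lobachevsky function `Λ(x) = -∫_0^x log|2 sin t| dt`. -/
def lob (x : ℝ) : ℝ := -∫ t in (0 : ℝ)..x, Real.log |2 * Real.sin t|

/-- A triple of integers is admissible. -/
def Admissible (n : ℕ) (i j k : ℤ) : Prop :=
  0 < i ∧ 0 < j ∧ 0 < k ∧ i < (n : ℤ) - 1 ∧ j < (n : ℤ) - 1 ∧ k < (n : ℤ) - 1 ∧
  (n : ℤ) - 1 < i + j + k ∧ i + j + k < 2 * ((n : ℤ) - 1) ∧
  0 < i + j - k ∧ 0 < j + k - i ∧ 0 < k + i - j ∧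
  i + j - k < (n : ℤ) - 1 ∧ j + k - i < (n : ℤ) - 1 ∧ k + i - j < (n : ℤ) - 1


namespace Bend

lemma xic_add (n : ℕ) (x y : ℂ) : xic n (x + y) = xic n x * xic n y := by
  unfold xic
  rw [← Complex.exp_add]
  congr 1
  ring

lemma xic_zero (n : ℕ) : xic n 0 = 1 := by simp [xic]

lemma xic_ne (n : ℕ) (x : ℂ) : xic n x ≠ 0 := Complex.exp_ne_zero _

lemma xic_n (n : ℕ) (hn : 2 ≤ n) : xic n n = -1 := by
  have h : (n : ℂ) ≠ 0 := by
    have : n ≠ 0 := by omega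
    exact_mod_cast this
  unfold xic
  rw [mul_div_assoc, div_self h, mul_one, Complex.exp_pi_mul_I]

lemma xic_neg_n (n : ℕ) (hn : 2 ≤ n) : xic n (-n) = -1 := by
  have h := xic_add n n (-n)
  rw [add_neg_cancel, xic_zero, xic_n n hn] at h
  linear_combination h

lemma xic_n_mul (n : ℕ) (hn : 2 ≤ n) (p : ℕ) : xic n (n * p) = (-1) ^ p := by
  induction p with
  | zero => simp [xic_zero]
  | succ p ih =>
    have : (n : ℂ) * ((p + 1 : ℕ) : ℂ) = n * p + n := by push_cast; ring
    rw [this, xic_add, ih, xic_n n hn, pow_succ]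

lemma qn_neg (n : ℕ) (x : ℂ) : qn n (-x) = -qn n x := by
  unfold qn; rw [neg_neg]; ring

lemma qn_zero (n : ℕ) : qn n 0 = 0 := by simp [qn]

lemma qn_n_sub (n : ℕ) (hn : 2 ≤ n) (x : ℂ) : qn n (n - x) = qn n x := by
  unfold qn
  have h1 : (n : ℂ) - x = n + -x := by ring
  have h2 : -((n : ℂ) - x) = -n + x := by ring
  rw [h2, h1, xic_add, xic_add, xic_n n hn, xic_neg_n n hn]
  ring

lemma qn_eq_zero (n : ℕ) (hn : 2 ≤ n) (x : ℂ) (h : qn n x = 0) : ∃ m : ℤ, x = n * m := by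
  unfold qn xic at h
  rw [sub_eq_zero, Complex.exp_eq_exp_iff_exists_int] at h
  obtain ⟨m, hm⟩ := h
  refine ⟨m, ?_⟩
  have hn0 : (n : ℂ) ≠ 0 := by
    have : n ≠ 0 := by omega
    exact_mod_cast this
  have hpi : (Real.pi : ℂ) ≠ 0 := by exact_mod_cast Real.pi_ne_zero
  have hI := Complex.I_ne_zero
  have : (Real.pi * Complex.I) * (x - n * m) = 0 := by
    field_simp at hm
    linear_combination (Real.pi * Complex.I) * hm / 2
  rcases mul_eq_zero.1 this with h | h
  · exact absurd h (mul_ne_zero hpi hI)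
  · linear_combination h

lemma qn_nat_ne (n : ℕ) (hn : 2 ≤ n) (m : ℕ) (h : m + 1 < n) : qn n ((m : ℂ) + 1) ≠ 0 := by
  intro h0
  obtain ⟨k, hk⟩ := qn_eq_zero n hn _ h0
  have hk' : ((m : ℤ) + 1) = n * k := by exact_mod_cast hk
  have : (n : ℤ) ∣ (m : ℤ) + 1 := ⟨k, hk'⟩
  have := Int.le_of_dvd (by omega) this
  omega

lemma qfac_succ (n m : ℕ) : qfac n (m + 1) = qfac n m * qn n ((m : ℂ) + 1) := by
  unfold qfac; rw [Finset.prod_range_succ]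

lemma qfac_ne (n : ℕ) (hn : 2 ≤ n) (m : ℕ) (h : m < n) : qfac n m ≠ 0 := by
  unfold qfac
  rw [Finset.prod_ne_zero_iff]
  intro j hj
  exact qn_nat_ne n hn j (by have := Finset.mem_range.1 hj; omega)

/-- falling factorial -/
def fal (n : ℕ) (x : ℂ) (m : ℕ) : ℂ := ∏ j ∈ Finset.range m, qn n (x - j)

/-- quantum binomial with natural lower index -/
def qb (n : ℕ) (x : ℂ) (m : ℕ) : ℂ := fal n x m / qfac n m

lemma fal_succ (n : ℕ) (x : ℂ) (m : ℕ) : fal n x (m + 1) = fal n x m * qn n (x - m) := by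
  unfold fal; rw [Finset.prod_range_succ]

lemma fal_add (n : ℕ) (x : ℂ) (m p : ℕ) : fal n x (m + p) = fal n x m * fal n (x - m) p := by
  unfold fal
  rw [Finset.prod_range_add]
  congr 1
  apply Finset.prod_congr rfl
  intro j _
  congr 1
  push_cast; ring

lemma fal_self (n m : ℕ) : fal n m m = qfac n m := by
  unfold fal qfac
  rw [← Finset.prod_range_reflect]
  apply Finset.prod_congr rfl
  intro j hj
  have := Finset.mem_range.1 hj
  congr 1
  rw [Nat.cast_sub (by omega), Nat.cast_sub (by omega)]
  push_cast; ring

lemma fal_nat (n m p : ℕ) (N : ℂ) (hN : N = m + p) : fal n N p * qfac n m = qfac n (m + p) := by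
  have h := fal_add n ((m + p : ℕ) : ℂ) p m
  have e : ((m + p : ℕ) : ℂ) - p = m := by push_cast; ring
  rw [e, fal_self, add_comm p m, fal_self] at h
  rw [h, hN]; push_cast; ring

lemma fal_eq_zero (n : ℕ) (N p : ℕ) (h : N < p) : fal n N p = 0 := by
  unfold fal
  apply Finset.prod_eq_zero (Finset.mem_range.2 h)
  rw [sub_self, qn_zero]

lemma qb_eq_zero (n : ℕ) (N p : ℕ) (h : N < p) : qb n N p = 0 := by
  unfold qb; rw [fal_eq_zero n N p h, zero_div]

lemma qb_zero (n : ℕ) (x : ℂ) : qb n x 0 = 1 := by simp [qb, fal, qfac]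

lemma qbin_eq (n : ℕ) (x y : ℂ) (m : ℕ) (hm : m < n) (h : x - y = m) :
    qbin n x y = qb n x m := by
  unfold qbin
  have hex : ∃ k : ℕ, k < n ∧ x - y = (k : ℂ) := ⟨m, hm, h⟩
  rw [dif_pos hex]
  have hc : hex.choose = m := by
    have := hex.choose_spec.2
    have h2 := this.symm.trans h
    exact_mod_cast h2
  rw [hc, Finset.prod_div_distrib, h]
  unfold qb
  congr 1
  exact fal_self n m

lemma qb_succ (n : ℕ) (hn : 2 ≤ n) (x : ℂ) (m : ℕ) (hm : m + 1 < n) :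
    qn n ((m : ℂ) + 1) * qb n x (m + 1) = qb n x m * qn n (x - m) := by
  unfold qb
  rw [fal_succ, qfac_succ]
  have h1 := qfac_ne n hn m (by omega)
  have h2 := qn_nat_ne n hn m hm
  field_simp

lemma qn_add (n : ℕ) (p r : ℂ) : qn n (p + r) = xic n (-r) * qn n p + xic n p * qn n r := by
  unfold qn
  have : -(p + r) = -p + -r := by ring
  rw [this, xic_add, xic_add]
  ring

lemma vander (n : ℕ) (hn : 2 ≤ n) (x y : ℂ) (m : ℕ) (hm : m < n) :
    qb n (x + y) m = ∑ i ∈ Finset.range (m + 1),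
      xic n (x * ((m : ℂ) - i) - y * i) * qb n x i * qb n y (m - i) := by
  induction m with
  | zero => simp [qb_zero, xic_zero]
  | succ m ih =>
    have hq := qn_nat_ne n hn m hm
    apply mul_left_cancel₀ hq
    rw [qb_succ n hn _ m hm, ih (by omega), Finset.sum_mul]
    have key : ∀ i ∈ Finset.range (m + 1),
        xic n (x * ((m : ℂ) - i) - y * i) * qb n x i * qb n y (m - i) * qn n (x + y - m) =
        xic n (x * ((m : ℂ) - i) - y * (i + 1) + (m - i)) * qn n ((i : ℂ) + 1) * qb n x (i + 1)
            * qb n y (m - i)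
        + xic n (x * ((m : ℂ) + 1 - i) - y * i - i) * qn n ((m : ℂ) + 1 - i) * qb n x i
            * qb n y (m + 1 - i) := by
      intro i hi
      have hi' := Finset.mem_range.1 hi
      have e : x + y - m = (x - i) + (y - ((m - i : ℕ) : ℂ)) := by
        rw [Nat.cast_sub (by omega)]; ring
      have s1 := qb_succ n hn x i (by omega)
      have s2 := qb_succ n hn y (m - i) (by omega)
      rw [e, qn_add]
      have e2 : m - i + 1 = m + 1 - i := by omega
      rw [e2] at s2
      have e3 : (((m - i : ℕ) : ℂ) + 1) = (m : ℂ) + 1 - i := by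
        rw [Nat.cast_sub (by omega)]; ring
      rw [e3] at s2
      have p1 : xic n (x * ((m : ℂ) - i) - y * (i + 1) + (m - i)) =
          xic n (x * ((m : ℂ) - i) - y * i) * xic n (-(y - ((m - i : ℕ) : ℂ))) := by
        rw [← xic_add, Nat.cast_sub (by omega)]; congr 1; ring
      have p2 : xic n (x * ((m : ℂ) + 1 - i) - y * i - i) =
          xic n (x * ((m : ℂ) - i) - y * i) * xic n (x - i) := by
        rw [← xic_add]; congr 1; ring
      rw [p1, p2]
      linear_combination (-(xic n (x * ((m : ℂ) - i) - y * i) * xic n (-(y - ((m - i : ℕ) : ℂ)))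
        * qb n y (m - i))) * s1 - (xic n (x * ((m : ℂ) - i) - y * i) * xic n (x - i)
        * qb n x i) * s2
    rw [Finset.sum_congr rfl key, Finset.sum_add_distrib]
    have A : ∑ i ∈ Finset.range (m + 1), xic n (x * ((m : ℂ) - i) - y * (i + 1) + (m - i))
          * qn n ((i : ℂ) + 1) * qb n x (i + 1) * qb n y (m - i)
        = ∑ i ∈ Finset.range (m + 1 + 1), xic n (x * ((m : ℂ) + 1 - i) - y * i + (m + 1 - i))
          * qn n (i : ℂ) * qb n x i * qb n y (m + 1 - i) := by
      rw [Finset.sum_range_succ' _ (m + 1)]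
      simp only [Nat.cast_zero, qn_zero, mul_zero, zero_mul, add_zero]
      apply Finset.sum_congr rfl
      intro i _
      rw [Nat.add_sub_add_right]
      push_cast
      congr 4
      ring
    have B : ∑ i ∈ Finset.range (m + 1), xic n (x * ((m : ℂ) + 1 - i) - y * i - i)
          * qn n ((m : ℂ) + 1 - i) * qb n x i * qb n y (m + 1 - i)
        = ∑ i ∈ Finset.range (m + 1 + 1), xic n (x * ((m : ℂ) + 1 - i) - y * i - i)
          * qn n ((m : ℂ) + 1 - i) * qb n x i * qb n y (m + 1 - i) := by
      rw [Finset.sum_range_succ _ (m + 1)]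
      push_cast
      rw [sub_self, qn_zero]
      ring
    rw [A, B, ← Finset.sum_add_distrib, Finset.mul_sum]
    apply Finset.sum_congr rfl
    intro i _
    have q : qn n ((m : ℂ) + 1) = xic n (m + 1 - i) * qn n i + xic n (-i) * qn n (m + 1 - i) := by
      have := qn_add n (m + 1 - i) i
      rw [sub_add_cancel] at this
      rw [this]; ring
    rw [q]
    have p1 : xic n (x * ((m : ℂ) + 1 - i) - y * i + (m + 1 - i)) =
       xic n (x * ((m : ℂ) + 1 - i) - y * i) * xic n (m + 1 - i) := xic_add _ _ _
    have p2 : xic n (x * ((m : ℂ) + 1 - i) - y * i - i) =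
       xic n (x * ((m : ℂ) + 1 - i) - y * i) * xic n (-i) := by
      rw [sub_eq_add_neg, xic_add]
    rw [p1, p2]
    push_cast
    ring

lemma vander_s (n : ℕ) (hn : 2 ≤ n) (s : ℂ) (hs : s = 1 ∨ s = -1) (x y : ℂ) (m : ℕ) (hm : m < n) :
    qb n (x + y) m = ∑ i ∈ Finset.range (m + 1),
      xic n (s * (x * ((m : ℂ) - i) - y * i)) * qb n x i * qb n y (m - i) := by
  rcases hs with rfl | rfl
  · simpa using vander n hn x y m hm
  · rw [add_comm, vander n hn y x m hm, ← Finset.sum_range_reflect]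
    apply Finset.sum_congr rfl
    intro i hi
    have hi' := Finset.mem_range.1 hi
    have e : m + 1 - 1 - i = m - i := by omega
    have e2 : m - (m - i) = i := by omega
    rw [e, e2, Nat.cast_sub (by omega)]
    have : y * ((m : ℂ) - (m - i)) - x * (m - i) = -1 * (x * (m - i) - y * i) := by ring
    rw [this]; ring

lemma fal_upper (n : ℕ) (x y : ℂ) (p : ℕ) (h : y = -x + p - 1) :
    fal n y p = (-1) ^ p * fal n x p := by
  unfold fal
  rw [← Finset.prod_range_reflect]
  have : ((-1 : ℂ)) ^ p = ∏ j ∈ Finset.range p, (-1 : ℂ) := by simp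
  rw [this, ← Finset.prod_mul_distrib]
  apply Finset.prod_congr rfl
  intro j hj
  have := Finset.mem_range.1 hj
  rw [Nat.cast_sub (by omega), Nat.cast_sub (by omega), neg_one_mul, ← qn_neg, h]
  congr 1
  push_cast; ring

lemma qb_upper (n : ℕ) (x y : ℂ) (p : ℕ) (h : y = -x + p - 1) :
    qb n y p = (-1) ^ p * qb n x p := by
  unfold qb; rw [fal_upper n x y p h]; ring

lemma qb_mul (n : ℕ) (hn : 2 ≤ n) (x : ℂ) (i j : ℕ) (h : j + i < n) :
    qb n ((j + i : ℕ) : ℂ) j * qb n x (j + i) = qb n x j * qb n (x - j) i := by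
  unfold qb
  have h1 := fal_nat n i j ((j + i : ℕ) : ℂ) (by push_cast; ring)
  rw [add_comm i j] at h1
  rw [fal_add n x, ← h1]
  have a1 := qfac_ne n hn i (by omega)
  have a2 := qfac_ne n hn j (by omega)
  have a3 := qfac_ne n hn (j + i) h
  have a4 : fal n ((j + i : ℕ) : ℂ) j ≠ 0 := by
    intro h0; rw [h0, zero_mul] at h1; exact a3 h1.symm
  field_simp

lemma inner (n : ℕ) (hn : 2 ≤ n) (s : ℂ) (hs : s = 1 ∨ s = -1) (u v k j : ℕ) (α β : ℂ)
    (hv : v < n) (hj : j ≤ v) :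
    ∑ z ∈ Finset.range (v + 1), (-1 : ℂ) ^ z *
      xic n (s * ((2 * z - v) * (β + 1) / 2 - (z * ((k : ℂ) - j) - u * j))) *
      qb n z j * qb n α z * qb n (α + β - k + v - z) (v - z) =
    (-1) ^ j * xic n (s * (-(v * (β + 1) / 2) - α * v + j * (u + v + α + β - k + 1))) *
      qb n α j * qb n (β + v - k) (v - j) := by
  obtain ⟨p, rfl⟩ := Nat.exists_eq_add_of_le hj
  rw [add_assoc, Finset.sum_range_add, Finset.sum_eq_zero, zero_add]
  swap
  · intro z hz
    rw [qb_eq_zero n z j (Finset.mem_range.1 hz)]; ring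
  have e : j + p - j = p := by omega
  rw [e, qb_upper n (-β + k - j - 1) _ p (by push_cast; ring)]
  have e2 : -β + k - j - 1 = (α - j) + (-(α + β - k) - 1) := by ring
  rw [e2, vander_s n hn s hs _ _ p (by omega), Finset.mul_sum, Finset.mul_sum]
  apply Finset.sum_congr rfl
  intro i hi
  have hi' := Finset.mem_range.1 hi
  have e3 : j + p - (j + i) = p - i := by omega
  have m := qb_mul n hn α i j (by omega)
  rw [e3, qb_upper n (-(α + β - k) - 1) _ (p - i)
    (by rw [Nat.cast_sub (by omega)]; push_cast; ring)]
  have sg : (-1 : ℂ) ^ (j + i) * (-1) ^ (p - i) = (-1) ^ j * (-1) ^ p := by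
    rw [← pow_add, ← pow_add]; congr 1; omega
  have ph : xic n (s * ((2 * ((j + i : ℕ) : ℂ) - ((j + p : ℕ) : ℂ)) * (β + 1) / 2
        - (((j + i : ℕ) : ℂ) * ((k : ℂ) - j) - u * j))) =
      xic n (s * (-(((j + p : ℕ) : ℂ) * (β + 1) / 2) - α * ((j + p : ℕ) : ℂ)
        + j * (u + ((j + p : ℕ) : ℂ) + α + β - k + 1))) *
      xic n (s * ((α - j) * ((p : ℂ) - i) - (-(α + β - k) - 1) * i)) := by
    rw [← xic_add]; congr 1; push_cast; ring
  rw [ph]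
  set X := xic n (s * (-(((j + p : ℕ) : ℂ) * (β + 1) / 2) - α * ((j + p : ℕ) : ℂ)
        + j * (u + ((j + p : ℕ) : ℂ) + α + β - k + 1)))
  set Y := xic n (s * ((α - j) * ((p : ℂ) - i) - (-(α + β - k) - 1) * i))
  set Q := qb n (-(α + β - k) - 1) (p - i)
  linear_combination (X * Y * Q * qb n ((j + i : ℕ) : ℂ) j * qb n α (j + i)) * sg
    + ((-1) ^ j * (-1) ^ p * X * Y * Q) * m

lemma combine (n : ℕ) (hn : 2 ≤ n) (v k j : ℕ) (β : ℂ) (hv : v < n) (hk : k < n)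
    (hj : j ≤ v) (hjk : j ≤ k) :
    qb n (β + v) k * qb n (β + v - k) (v - j) =
    qb n (β + v) v * (qb n v j * qb n β (k - j) * (qfac n j * qfac n (k - j) / qfac n k)) := by
  unfold qb
  have h1 := fal_add n (β + v) k (v - j)
  have h2 := fal_add n (β + v) v (k - j)
  have e : k + (v - j) = v + (k - j) := by omega
  rw [e, h2, add_sub_cancel_right] at h1
  have h3 := fal_nat n (v - j) j v (by rw [Nat.cast_sub hj]; ring)
  rw [Nat.sub_add_cancel hj] at h3
  have a1 := qfac_ne n hn k hk
  have a2 := qfac_ne n hn v hv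
  have a3 := qfac_ne n hn (v - j) (by omega)
  have a4 := qfac_ne n hn (k - j) (by omega)
  have a5 := qfac_ne n hn j (by omega)
  rw [div_mul_div_comm, ← h1, ← h3]
  have a6 : fal n v j ≠ 0 := by
    intro h0; rw [h0, zero_mul] at h3; exact a2 h3.symm
  field_simp

lemma main_sum (n : ℕ) (hn : 2 ≤ n) (s : ℂ) (hs : s = 1 ∨ s = -1) (u v k : ℕ) (α β : ℂ)
    (hv : v < n) (hk : k < n) :
    qb n (β + v) k * ∑ z ∈ Finset.range (v + 1), (-1 : ℂ) ^ z *
      xic n (s * ((2 * z - v) * (β + 1) / 2)) *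
      qb n (u + z) k * qb n α z * qb n (α + β - k + v - z) (v - z) =
    qb n (β + v) v * ∑ j ∈ Finset.range (k + 1),
      (-1) ^ j * xic n (s * (-(v * (β + 1) / 2) - α * v + j * (u + v + α + β - k + 1))) *
      (qb n u (k - j) * qb n v j * qb n α j * qb n β (k - j) *
        (qfac n j * qfac n (k - j) / qfac n k)) := by
  have hs' : -s = 1 ∨ -s = -1 := by
    rcases hs with rfl | rfl
    · right; rfl
    · left; ring
  have step : ∑ z ∈ Finset.range (v + 1), (-1 : ℂ) ^ z *
      xic n (s * ((2 * z - v) * (β + 1) / 2)) *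
      qb n (u + z) k * qb n α z * qb n (α + β - k + v - z) (v - z) =
      ∑ j ∈ Finset.range (k + 1), qb n u (k - j) * ∑ z ∈ Finset.range (v + 1), (-1 : ℂ) ^ z *
      xic n (s * ((2 * z - v) * (β + 1) / 2 - (z * ((k : ℂ) - j) - u * j))) *
      qb n z j * qb n α z * qb n (α + β - k + v - z) (v - z) := by
    simp_rw [Finset.mul_sum]
    rw [Finset.sum_comm]
    apply Finset.sum_congr rfl
    intro z _
    rw [add_comm (u : ℂ) z, vander_s n hn (-s) hs' z u k hk, Finset.mul_sum, Finset.sum_mul,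
      Finset.sum_mul]
    apply Finset.sum_congr rfl
    intro j _
    have : xic n (s * ((2 * z - v) * (β + 1) / 2 - (z * ((k : ℂ) - j) - u * j))) =
      xic n (s * ((2 * z - v) * (β + 1) / 2)) * xic n (-s * (z * ((k : ℂ) - j) - u * j)) := by
      rw [← xic_add]; congr 1; ring
    rw [this]; ring
  rw [step, Finset.mul_sum, Finset.mul_sum]
  apply Finset.sum_congr rfl
  intro j hj
  have hj' := Finset.mem_range.1 hj
  by_cases hjv : j ≤ v
  · rw [inner n hn s hs u v k j α β hv hjv]
    have c := combine n hn v k j β hv hk hjv (by omega)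
    linear_combination (qb n u (k - j) * ((-1) ^ j *
      xic n (s * (-(v * (β + 1) / 2) - α * v + j * (u + v + α + β - k + 1))) * qb n α j)) * c
  · rw [qb_eq_zero n v j (by omega), Finset.sum_eq_zero]
    · ring
    · intro z hz
      have := Finset.mem_range.1 hz
      rw [qb_eq_zero n z j (by omega)]; ring

lemma qfac_compl (n : ℕ) (hn : 2 ≤ n) (k p : ℕ) (h : k + p + 1 = n) :
    qfac n k * qfac n p = qfac n (n - 1) := by
  have e : n - 1 = k + p := by omega
  rw [e, ← fal_nat n k p (k + p) rfl, mul_comm]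
  congr 1
  unfold fal qfac
  apply Finset.prod_congr rfl
  intro j _
  rw [← qn_n_sub n hn]
  congr 1
  rw [← h]; push_cast; ring

/-- both binomials agree -/
lemma qb_compl (n : ℕ) (hn : 2 ≤ n) (k m : ℕ) (hk : k < n) (hm : m < n) :
    qb n ((n : ℂ) - 1 - k) m = qb n ((m + k : ℕ) : ℂ) k := by
  unfold qb
  have h1 : fal n ((n : ℂ) - 1 - k) m = fal n ((m + k : ℕ) : ℂ) m := by
    unfold fal
    rw [← Finset.prod_range_reflect]
    apply Finset.prod_congr rfl
    intro j hj
    have := Finset.mem_range.1 hj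
    rw [← qn_n_sub n hn]
    congr 1
    rw [Nat.cast_sub (by omega), Nat.cast_sub (by omega)]
    push_cast; ring
  have h2 := fal_nat n k m ((m + k : ℕ) : ℂ) (by push_cast; ring)
  have h3 := fal_nat n m k ((m + k : ℕ) : ℂ) (by push_cast; ring)
  rw [h1, div_eq_div_iff (qfac_ne n hn m hm) (qfac_ne n hn k hk), h2, h3, add_comm]

lemma qbin_L (n : ℕ) (hn : 2 ≤ n) (k N : ℕ) (hk : k < n) (hN : N < k + n) (x y : ℂ)
    (hx : x = (n : ℂ) - 1 - k) (hy : y = (n : ℂ) - 1 - N) :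
    qbin n x y = qb n N k := by
  by_cases h : k ≤ N
  · obtain ⟨m, rfl⟩ := Nat.exists_eq_add_of_le h
    rw [qbin_eq n x y m (by omega) (by rw [hx, hy]; push_cast; ring), hx,
      qb_compl n hn k m hk (by omega), add_comm]
  · rw [qb_eq_zero n N k (by omega)]
    unfold qbin
    rw [dif_neg]
    rintro ⟨m, _, h2⟩
    rw [hx, hy] at h2
    have : (N : ℂ) = k + m := by linear_combination h2
    have : N = k + m := by exact_mod_cast this
    omega

lemma qbin_R (n : ℕ) (hn : 2 ≤ n) (k N : ℕ) (hk : k < n) (hN : N < k + n) (x y : ℂ)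
    (hx : x = (n : ℂ) - 1 - k) (hy : y = (N : ℂ) - k) :
    qbin n x y = qb n N k := by
  by_cases h : N < n
  · rw [qbin_eq n x y (n - 1 - N) (by omega)
      (by rw [hx, hy, Nat.cast_sub (by omega), Nat.cast_sub (by omega)]; push_cast; ring), hx]
    have hx' : (n : ℂ) - 1 - k = ((n - 1 - k : ℕ) : ℂ) := by
      rw [Nat.cast_sub (by omega), Nat.cast_sub (by omega)]; push_cast; ring
    by_cases hkN : k ≤ N
    · have f1 := fal_nat n (N - k) (n - 1 - N) ((n : ℂ) - 1 - k) (by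
        rw [hx', ← Nat.cast_add]; congr 1; omega)
      have f2 := fal_nat n (N - k) k N (by rw [← Nat.cast_add]; congr 1; omega)
      have g1 := qfac_compl n hn k (n - 1 - k) (by omega)
      have g2 := qfac_compl n hn N (n - 1 - N) (by omega)
      rw [show N - k + (n - 1 - N) = n - 1 - k by omega] at f1
      rw [show N - k + k = N by omega] at f2
      unfold qb
      rw [div_eq_div_iff (qfac_ne n hn _ (by omega)) (qfac_ne n hn _ hk)]
      apply mul_right_cancel₀ (qfac_ne n hn (N - k) (by omega))
      linear_combination qfac n k * f1 - qfac n (n - 1 - N) * f2 + g1 - g2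
    · rw [hx', qb_eq_zero n _ _ (by omega), qb_eq_zero n _ _ (by omega)]
  · have h0 : qb n N k = 0 := by
      unfold qb fal
      rw [Finset.prod_eq_zero (Finset.mem_range.2 (show N - n < k by omega)), zero_div]
      have : (N : ℂ) - ((N - n : ℕ) : ℂ) = n - 0 := by
        rw [Nat.cast_sub (by omega)]; ring
      rw [this, qn_n_sub n hn, qn_zero]
    rw [h0]
    unfold qbin
    rw [dif_neg]
    rintro ⟨m, _, h2⟩
    rw [hx, hy] at h2
    have : (n : ℂ) = N + m + 1 := by linear_combination h2
    have : n = N + m + 1 := by exact_mod_cast this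
    omega

lemma qb_neg_n (n : ℕ) (hn : 2 ≤ n) (x y : ℂ) (z : ℕ) (h : y = n - x + z - 1) :
    qb n y z = qb n x z := by
  unfold qb fal
  congr 1
  rw [← Finset.prod_range_reflect]
  apply Finset.prod_congr rfl
  intro j hj
  have := Finset.mem_range.1 hj
  rw [← qn_n_sub n hn]
  congr 1
  rw [h, Nat.cast_sub (by omega), Nat.cast_sub (by omega)]
  push_cast; ring

lemma qb_ne (n : ℕ) (hn : 2 ≤ n) (b : ℂ) (hb : NotHalfInt b) (v : ℕ) (hv : v < n) :
    qb n (2 * b) v ≠ 0 := by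
  unfold qb
  apply div_ne_zero _ (qfac_ne n hn v hv)
  unfold fal
  rw [Finset.prod_ne_zero_iff]
  intro j _ h0
  obtain ⟨m, hm⟩ := qn_eq_zero n hn _ h0
  apply hb (n * m + j)
  push_cast
  linear_combination hm / 2

lemma sign_congr (p q : ℕ) (h : p % 2 = q % 2) : (-1 : ℂ) ^ p = (-1) ^ q := by
  rw [neg_one_pow_eq_pow_mod_two, h, ← neg_one_pow_eq_pow_mod_two]

lemma sign_zpow (p q : ℕ) : (-1 : ℂ) ^ ((p : ℤ) - (q : ℤ)) = (-1) ^ (p + q) := by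
  rw [zpow_sub₀ (by norm_num), zpow_natCast, zpow_natCast, pow_add]
  rcases neg_one_pow_eq_or ℂ q with h | h <;> rw [h] <;> norm_num [div_neg]

lemma cancel (p q X J : ℂ) (hp : p ≠ 0) (h : q * X = p * J) : p⁻¹ * q * X = J := by
  rw [mul_assoc, h, inv_mul_cancel_left₀ hp]

lemma regroup (e s x p q X y y' : ℂ) :
    e * s * x * p * q * X * y * y' = e * s * x * (p * q * X) * y * y' := by ring

lemma regroup2 (e s x p q w X y y' : ℂ) :
    e * s * x * p * q * (w * X) * y * y' = e * s * x * w * (p * q * X) * y * y' := by ring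

end Bend

theorem CG_bend_identity (n : ℕ) (hn : 2 ≤ n) (a b c : ℂ)
    (ha : NotHalfInt a) (hb : NotHalfInt b) (hc : NotHalfInt c)
    (habc : InZn n (a + b - c)) (u v t : ℕ)
    (hu : u ≤ n - 1) (hv : v ≤ n - 1) (ht : t ≤ n - 1)
    (huvt : (u : ℂ) + (v : ℂ) - (t : ℂ) = a + b - c) :
    CG n ((n : ℂ) - 1 - a) c b (n - 1 - u) t v * xic n (-a * ((n : ℂ) - 1)) *
        xic n (((n : ℂ) - 1) * (u : ℂ))
      = CG n c ((n : ℂ) - 1 - b) a t (n - 1 - v) u *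
          xic n (-((n : ℂ) - 1 - b) * ((n : ℂ) - 1)) *
          xic n (((n : ℂ) - 1) * ((n : ℂ) - 1 - (v : ℂ))) := by
  have hun : u < n := by omega
  have hvn : v < n := by omega
  have htn : t < n := by omega
  obtain ⟨k, hk, habk⟩ := habc
  have hkC : (u : ℂ) + v = t + k := by linear_combination huvt + habk
  have hkN : u + v = t + k := by exact_mod_cast hkC
  have hcc : c = a + b - k := by linear_combination -habk
  have cu : ((n - 1 - u : ℕ) : ℂ) = n - 1 - u := by
    rw [Nat.cast_sub (by omega), Nat.cast_sub (by omega)]; push_cast; ring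
  have cv : ((n - 1 - v : ℕ) : ℂ) = n - 1 - v := by
    rw [Nat.cast_sub (by omega), Nat.cast_sub (by omega)]; push_cast; ring
  have hb0 := Bend.qb_ne n hn b hb v hvn
  have ha0 := Bend.qb_ne n hn a ha u hun
  have eb : (2 * b - v) + v = 2 * b := by ring
  have ea : (2 * a - u) + u = 2 * a := by ring
  have SL := Bend.main_sum n hn 1 (Or.inl rfl) u v k (2 * a - u) (2 * b - v) hvn hk
  have SR := Bend.main_sum n hn (-1) (Or.inr rfl) v u k (2 * b - v) (2 * a - u) hun hk
  rw [eb] at SL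
  rw [ea] at SR
  have sumL : ∑ z ∈ Finset.range (v + 1),
      (-1 : ℂ) ^ z * xic n ((2 * (z : ℂ) - (v : ℂ)) * (2 * b - (v : ℂ) + 1) / 2) *
      qbin n ((n : ℂ) - 1 - a + c - b) (((n - 1 - u : ℕ) : ℂ) - (z : ℂ)) *
      qbin n (2 * ((n : ℂ) - 1 - a) - ((n - 1 - u : ℕ) : ℂ) + (z : ℂ))
        (2 * ((n : ℂ) - 1 - a) - ((n - 1 - u : ℕ) : ℂ)) *
      qbin n (2 * c - (t : ℂ) + ((v : ℂ) - (z : ℂ))) (2 * c - (t : ℂ)) =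
      ∑ z ∈ Finset.range (v + 1), (-1 : ℂ) ^ z *
      xic n (1 * ((2 * z - v) * (2 * b - v + 1) / 2)) *
      Bend.qb n (u + z) k * Bend.qb n (2 * a - u) z *
      Bend.qb n (2 * a - u + (2 * b - v) - k + v - z) (v - z) := by
    apply Finset.sum_congr rfl
    intro z hz
    have hz' := Finset.mem_range.1 hz
    rw [cu, Bend.qbin_L n hn k (u + z) hk (by omega) _ _ (by rw [hcc]; ring)
        (by push_cast; ring),
      Bend.qbin_eq n _ _ z (by omega) (by ring),
      Bend.qbin_eq n _ _ (v - z) (by omega) (by rw [Nat.cast_sub (by omega)]; ring),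
      Bend.qb_neg_n n hn (2 * a - u) _ z (by ring), one_mul]
    push_cast
    congr 2
    rw [hcc]
    linear_combination hkC
  have sumR : ∑ z ∈ Finset.range (u + 1),
      (-1 : ℂ) ^ z * xic n ((2 * (z : ℂ) - (u : ℂ)) * (2 * a - (u : ℂ) + 1) / 2) *
      qbin n (c + ((n : ℂ) - 1 - b) - a) ((t : ℂ) - (z : ℂ)) *
      qbin n (2 * c - (t : ℂ) + (z : ℂ)) (2 * c - (t : ℂ)) *
      qbin n (2 * ((n : ℂ) - 1 - b) - ((n - 1 - v : ℕ) : ℂ) + ((u : ℂ) - (z : ℂ)))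
        (2 * ((n : ℂ) - 1 - b) - ((n - 1 - v : ℕ) : ℂ)) =
      (-1) ^ u * ∑ z ∈ Finset.range (u + 1), (-1 : ℂ) ^ z *
      xic n (-1 * ((2 * z - u) * (2 * a - u + 1) / 2)) *
      Bend.qb n (v + z) k * Bend.qb n (2 * b - v) z *
      Bend.qb n (2 * b - v + (2 * a - u) - k + u - z) (u - z) := by
    rw [← Finset.sum_range_reflect, Finset.mul_sum]
    apply Finset.sum_congr rfl
    intro w hw
    have hw' := Finset.mem_range.1 hw
    rw [show u + 1 - 1 - w = u - w by omega]
    have cw : ((u - w : ℕ) : ℂ) = u - w := by rw [Nat.cast_sub (by omega)]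
    have sg : (-1 : ℂ) ^ (u - w) = (-1) ^ u * (-1) ^ w := by
      obtain ⟨d, rfl⟩ := Nat.exists_eq_add_of_le (show w ≤ u by omega)
      rw [Nat.add_sub_cancel_left, pow_add]
      have : ((-1 : ℂ) ^ w) * (-1) ^ w = 1 := by rw [← mul_pow]; simp
      linear_combination (-(-1 : ℂ) ^ d) * this
    rw [cv, Bend.qbin_R n hn k (v + w) hk (by omega) _ _ (by rw [hcc]; ring)
        (by rw [cw]; push_cast; linear_combination -hkC),
      Bend.qbin_eq n _ _ (u - w) (by omega) (by ring),
      Bend.qbin_eq n _ _ w (by omega) (by rw [cw]; ring),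
      Bend.qb_neg_n n hn (2 * b - v) _ w (by rw [cw]; ring), sg, cw]
    have e1 : 2 * c - t + ((u : ℂ) - w) = 2 * b - v + (2 * a - u) - k + u - w := by
      rw [hcc]; linear_combination hkC
    have e2 : (2 * ((u : ℂ) - w) - u) * (2 * a - u + 1) / 2 =
      -1 * ((2 * w - u) * (2 * a - u + 1) / 2) := by ring
    rw [e1, e2]
    push_cast
    ring
  have bL : qbin n (2 * b) ((n : ℂ) - 1 - a + c + b - ((n : ℂ) - 1)) = Bend.qb n (2 * b) k :=
    Bend.qbin_eq n _ _ k hk (by rw [hcc]; ring)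
  have bR : qbin n (2 * a) (c + ((n : ℂ) - 1 - b) + a - ((n : ℂ) - 1)) = Bend.qb n (2 * a) k :=
    Bend.qbin_eq n _ _ k hk (by rw [hcc]; ring)
  have dL : qbin n (2 * b) (2 * b - v) = Bend.qb n (2 * b) v := Bend.qbin_eq n _ _ v hvn (by ring)
  have dR : qbin n (2 * a) (2 * a - u) = Bend.qb n (2 * a) u := Bend.qbin_eq n _ _ u hun (by ring)
  unfold CG
  rw [sumL, sumR, bL, bR, dL, dR]
  rw [Bend.regroup, Bend.regroup2, Bend.cancel _ _ _ _ hb0 SL, Bend.cancel _ _ _ _ ha0 SR]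
  rw [Bend.sign_zpow, Bend.sign_zpow]
  have ee : b - ((n : ℂ) - 1 - a) - c = a - c - ((n : ℂ) - 1 - b) := by ring
  rw [ee, cu, cv]
  conv_rhs => rw [← Finset.sum_range_reflect]
  simp only [Finset.mul_sum, Finset.sum_mul]
  apply Finset.sum_congr rfl
  intro j hj
  have hj' := Finset.mem_range.1 hj
  rw [show k + 1 - 1 - j = k - j by omega, show k - (k - j) = j by omega]
  have ck : ((k - j : ℕ) : ℂ) = k - j := by rw [Nat.cast_sub (by omega)]
  rw [ck]
  set E := Complex.exp (Real.pi * Complex.I * (a - c - ((n : ℂ) - 1 - b)) / 2)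
  generalize hW : qfac n j * qfac n (k - j) / qfac n k = W
  rw [show qfac n (k - j) * qfac n j / qfac n k = W by rw [← hW]; ring]
  generalize Bend.qb n u (k - j) = q1
  generalize Bend.qb n v j = q2
  generalize Bend.qb n (2 * a - u) j = q3
  generalize Bend.qb n (2 * b - v) (k - j) = q4
  generalize hx1 : xic n (((t : ℂ) * (2 * c - t + 1) -
    ((n : ℂ) - 1 - u) * (2 * ((n : ℂ) - 1 - a) - ((n : ℂ) - 1 - u) + 1)) / 2) = x1
  generalize hx2 : xic n (1 * (-(v * (2 * b - v + 1) / 2) - (2 * a - u) * v +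
    j * (u + v + (2 * a - u) + (2 * b - v) - k + 1))) = x2
  generalize hx3 : xic n (-a * ((n : ℂ) - 1)) = x3
  generalize hx4 : xic n (((n : ℂ) - 1) * u) = x4
  generalize hy1 : xic n ((((n : ℂ) - 1 - v) * (2 * ((n : ℂ) - 1 - b) - ((n : ℂ) - 1 - v) + 1) -
    (t : ℂ) * (2 * c - t + 1)) / 2) = y1
  generalize hy2 : xic n (-1 * (-(u * (2 * a - u + 1) / 2) - (2 * b - v) * u +
    ((k : ℂ) - j) * (v + u + (2 * b - v) + (2 * a - u) - k + 1))) = y2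
  generalize hy3 : xic n (-((n : ℂ) - 1 - b) * ((n : ℂ) - 1)) = y3
  generalize hy4 : xic n (((n : ℂ) - 1) * ((n : ℂ) - 1 - v)) = y4
  have ph : x1 * x2 * x3 * x4 * (-1) ^ (n - 1) = y1 * y2 * y3 * y4 * (-1) ^ (u + v) := by
    rw [← hx1, ← hx2, ← hx3, ← hx4, ← hy1, ← hy2, ← hy3, ← hy4,
      ← Bend.xic_n_mul n hn, ← Bend.xic_n_mul n hn]
    simp only [← Bend.xic_add]
    congr 1
    have tt : (t : ℂ) = u + v - k := by linear_combination -hkC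
    rw [tt, hcc, Nat.cast_sub (by omega)]
    push_cast
    ring
  have sq : (-1 : ℂ) ^ (n - 1) * (-1) ^ (n - 1) = 1 := by rw [← mul_pow]; simp
  have sg : (-1 : ℂ) ^ (t + v) * (-1) ^ j * ((-1) ^ (u + v) * (-1) ^ (n - 1)) =
      (-1) ^ (n - 1 - v + u) * (-1) ^ u * (-1) ^ (k - j) := by
    simp only [← pow_add]
    apply Bend.sign_congr
    omega
  have ph2 : x1 * x2 * x3 * x4 = y1 * y2 * y3 * y4 * ((-1) ^ (u + v) * (-1) ^ (n - 1)) := by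
    linear_combination (-1) ^ (n - 1) * ph - x1 * x2 * x3 * x4 * sq
  linear_combination (E * (-1) ^ (t + v) * (-1) ^ j * (q1 * q2 * q3 * q4 * W)) * ph2 +
    (E * (q1 * q2 * q3 * q4 * W) * y1 * y2 * y3 * y4) * sg

end
end

section
/- Let a, b, c ∈ ℂ \ (1/2)ℤ with a+b−c ∈ {0,1,…,n−1}. Then Σ_{t=0}^{n−1−(a+b−c)} C^{b, n−1−c, n−1−a}_{a+b−c+t, n−1−t, n−1} · C^{c, n−1−b, a}_{t, n−1+c−a−b−t, 0} = [2a+n¦2a+1]. (This is the value of the theta graph: the composition Y_{a,b}^c ∘ Y_c^{a,b}, for suitable colorings, acts as [2a+n¦2a+1] times the identity.) -/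
open Complex Finset Filter
open scoped Matrix Kronecker Real

noncomputable section

section theta
variable {n : ℕ}

lemma xic_add (x y : ℂ) : xic n (x + y) = xic n x * xic n y := by
  unfold xic; rw [← Complex.exp_add]; congr 1; ring

lemma xic_zero : xic n 0 = 1 := by simp [xic]

lemma xic_n (hn : n ≠ 0) : xic n n = -1 := by
  unfold xic
  have : (n : ℂ) ≠ 0 := by exact_mod_cast hn
  rw [mul_div_assoc, div_self this, mul_one, Complex.exp_pi_mul_I]

lemma xic_mul_n (hn : n ≠ 0) (m : ℕ) : xic n (m * n) = (-1) ^ m := by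
  induction m with
  | zero => simp [xic_zero]
  | succ m ih => push_cast; rw [add_mul, xic_add, ih, one_mul, xic_n hn, pow_succ]

lemma qn_neg (x : ℂ) : qn n (-x) = -qn n x := by unfold qn; rw [neg_neg]; ring

lemma qn_add_n (hn : n ≠ 0) (x : ℂ) : qn n (x + n) = -qn n x := by
  have h1 : xic n (x + n) = - xic n x := by rw [xic_add, xic_n hn]; ring
  have h2 : xic n (-(x + n)) = - xic n (-x) := by
    have : xic n (-x) = xic n (-(x+n)) * xic n n := by rw [← xic_add]; congr 1; ring
    rw [this, xic_n hn]; ring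
  unfold qn; rw [h1, h2]; ring

lemma qn_ne (hn : n ≠ 0) (x : ℂ) (h : ∀ m : ℤ, x ≠ m * n) : qn n x ≠ 0 := by
  intro h0
  have hn' : (n : ℂ) ≠ 0 := by exact_mod_cast hn
  unfold qn xic at h0
  rw [sub_eq_zero, Complex.exp_eq_exp_iff_exists_int] at h0
  obtain ⟨m, hm⟩ := h0
  apply h m
  have hp : (Real.pi : ℂ) * I ≠ 0 := by simp [Real.pi_ne_zero]
  field_simp at hm
  have : (Real.pi : ℂ) * I * (2 * (x - m * n)) = 0 := by linear_combination (Real.pi : ℂ) * I * hm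
  rw [mul_eq_zero] at this
  rcases this with h | h
  · exact absurd h hp
  · linear_combination h / 2

/-- ascending product -/
def UU (n : ℕ) (x : ℂ) (m : ℕ) : ℂ := ∏ j ∈ Finset.range m, qn n (x + j)
/-- descending product -/
def DD (n : ℕ) (x : ℂ) (m : ℕ) : ℂ := ∏ j ∈ Finset.range m, qn n (x - j)

lemma DD_eq_UU (x y : ℂ) (m : ℕ) (h : y = x - m + 1) : DD n x m = UU n y m := by
  unfold DD UU
  rw [← Finset.prod_range_reflect]
  apply Finset.prod_congr rfl
  intro j hj
  have := Finset.mem_range.1 hj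
  rw [Nat.sub_sub, Nat.cast_sub (by omega), h]; congr 1; push_cast; ring

lemma DD_neg (x : ℂ) (m : ℕ) : DD n x m = (-1) ^ m * UU n (-x) m := by
  unfold DD UU
  rw [← Finset.card_range m, ← Finset.prod_const, Finset.card_range, ← Finset.prod_mul_distrib]
  apply Finset.prod_congr rfl
  intro j hj
  rw [neg_one_mul, ← qn_neg]; congr 1; ring

lemma UU_add_n (hn : n ≠ 0) (x : ℂ) (m : ℕ) : UU n (x + n) m = (-1) ^ m * UU n x m := by
  unfold UU
  rw [← Finset.card_range m, ← Finset.prod_const, Finset.card_range, ← Finset.prod_mul_distrib]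
  apply Finset.prod_congr rfl
  intro j hj
  rw [neg_one_mul, ← qn_add_n hn]; congr 1; ring

lemma UU_add (x y : ℂ) (m p : ℕ) (h : y = x + m) : UU n x (m + p) = UU n x m * UU n y p := by
  unfold UU
  rw [Finset.prod_range_add]; congr 1
  apply Finset.prod_congr rfl
  intro j hj
  congr 1; rw [h]; push_cast; ring

lemma qfac_eq (m : ℕ) : qfac n m = UU n 1 m := by
  unfold qfac UU; apply Finset.prod_congr rfl; intro j _; rw [add_comm]

lemma qfac_ne (hn : n ≠ 0) {m : ℕ} (h : m < n) : qfac n m ≠ 0 := by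
  unfold qfac
  rw [Finset.prod_ne_zero_iff]
  intro j hj
  have := Finset.mem_range.1 hj
  apply qn_ne hn
  intro i hi
  have hi' : (j : ℤ) + 1 = i * n := by exact_mod_cast hi
  have h1 : (j : ℤ) + 1 < n := by omega
  have h2 : 0 < i := by by_contra hh; push Not at hh; nlinarith
  nlinarith

lemma qbin_eq (x y : ℂ) (m : ℕ) (hm : m < n) (h : x - y = m) :
    qbin n x y = DD n x m / qfac n m := by
  have hex : ∃ k : ℕ, k < n ∧ x - y = (k : ℂ) := ⟨m, hm, h⟩
  unfold qbin
  rw [dif_pos hex]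
  have : hex.choose = m := by
    have := hex.choose_spec.2
    exact_mod_cast (h.symm.trans this).symm
  rw [this, Finset.prod_div_distrib, h]
  congr 1
  change DD n m m = _
  rw [DD_eq_UU (m : ℂ) 1 m (by ring), qfac_eq]

lemma qbin_neg (x y : ℂ) (m : ℕ) (h : x - y = -(m + 1)) : qbin n x y = 0 := by
  unfold qbin
  rw [dif_neg]
  rintro ⟨k, -, hk⟩
  rw [h] at hk
  have : (k : ℤ) + m + 1 = 0 := by
    have : (k : ℂ) + m + 1 = 0 := by rw [← hk]; ring
    exact_mod_cast this
  omega

lemma qbin_self (hn : n ≠ 0) (x y : ℂ) (h : x = y) : qbin n x y = 1 := by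
  rw [qbin_eq x y 0 (by omega) (by rw [h]; simp)]
  simp [DD, qfac]

lemma qfac_compl (hn : n ≠ 0) (p q : ℕ) (h : p + q + 1 = n) :
    qfac n p * qfac n q = qfac n (p + q) := by
  have hc : (n : ℂ) = p + q + 1 := by exact_mod_cast h.symm
  rw [qfac_eq (p + q), UU_add (1 : ℂ) (1 + p) p q rfl, ← qfac_eq, qfac_eq q,
    ← DD_eq_UU (q : ℂ) 1 q (by ring), DD_neg]
  rw [show (1 : ℂ) + p = -q + n by rw [hc]; ring, UU_add_n hn]

/-! Abstract q-Vandermonde -/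

def GG (e : ℂ → ℂ) : ℕ → ℕ → ℂ
  | 0, 0 => 1
  | 0, _ + 1 => 0
  | k + 1, 0 => GG e k 0
  | k + 1, s + 1 => e (-(s + 1)) * GG e k (s + 1) + e (k - s) * GG e k s

def QQ (e : ℂ → ℂ) (x : ℂ) : ℂ := e x - e (-x)

def PP (e : ℂ → ℂ) (x : ℂ) (m : ℕ) : ℂ := ∏ j ∈ Finset.range m, QQ e (x + j)

lemma GG_big (e : ℂ → ℂ) (k s : ℕ) (h : k < s) : GG e k s = 0 := by
  induction k generalizing s with
  | zero => cases s with
    | zero => omega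
    | succ s => rfl
  | succ k ih => cases s with
    | zero => omega
    | succ s => rw [GG, ih _ (by omega), ih _ (by omega)]; ring

lemma GG_zero (e : ℂ → ℂ) (k : ℕ) : GG e k 0 = 1 := by
  induction k with
  | zero => rfl
  | succ k ih => rw [GG, ih]

lemma PP_succ (e : ℂ → ℂ) (x : ℂ) (m : ℕ) : PP e x (m + 1) = PP e x m * QQ e (x + m) := by
  unfold PP; rw [Finset.prod_range_succ]

lemma PP_succ' (e : ℂ → ℂ) (x : ℂ) (m : ℕ) : PP e x (m + 1) = QQ e x * PP e (x + 1) m := by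
  unfold PP; rw [Finset.prod_range_succ', mul_comm]; congr 1
  · simp
  · apply Finset.prod_congr rfl; intro j _; congr 1; push_cast; ring

lemma GG_fac (e : ℂ → ℂ) (h0 : e 0 = 1) (hadd : ∀ x y, e (x + y) = e x * e y) (s r : ℕ) :
    GG e (s + r) s * (PP e 1 s * PP e 1 r) = PP e 1 (s + r) := by
  induction hk : s + r generalizing s r with
  | zero =>
    obtain ⟨rfl, rfl⟩ : s = 0 ∧ r = 0 := by omega
    simp [GG, PP]
  | succ k ih =>
    cases s with
    | zero =>
      obtain rfl : r = k + 1 := by omega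
      rw [GG_zero]; simp [PP]
    | succ s =>
      have hks : (k : ℂ) - s = r := by
        have : k = s + r := by omega
        rw [this]; push_cast; ring
      have e2 := ih s r (by omega)
      have e1 : GG e k (s + 1) * (PP e 1 (s + 1) * PP e 1 r) = PP e 1 k * QQ e r := by
        cases r with
        | zero => rw [GG_big _ _ _ (by omega)]; simp [QQ]
        | succ r =>
          have e1 := ih (s + 1) r (by omega)
          rw [PP_succ e 1 r, ← mul_assoc, ← mul_assoc, mul_assoc (GG e k (s + 1)), e1]
          congr 2; push_cast; ring
      rw [GG, hks, add_mul, mul_assoc, e1]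
      have e3 : e r * GG e k s * (PP e 1 (s + 1) * PP e 1 r)
          = e r * QQ e (1 + s) * PP e 1 k := by
        rw [PP_succ e 1 s, ← e2]; ring
      rw [e3, PP_succ]
      have hkk : (1 : ℂ) + k = (s + 1) + r := by linear_combination hks
      rw [hkk, add_comm (1 : ℂ) s]
      unfold QQ
      rw [hadd ((s : ℂ) + 1) r, show -((s : ℂ) + 1 + r) = -((s : ℂ) + 1) + -r by ring,
        hadd (-((s : ℂ) + 1)) (-r)]
      ring

lemma vander (e : ℂ → ℂ) (h0 : e 0 = 1) (hadd : ∀ x y, e (x + y) = e x * e y) (k : ℕ) (B C : ℂ) :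
    ∑ s ∈ Finset.range (k + 1), (-1) ^ s * e (s * (C - B + k - 1)) * GG e k s *
      (PP e B s * PP e (C + s) (k - s)) = e (-(k * B)) * PP e (C - B) k := by
  induction k generalizing B C with
  | zero => simp [GG, PP, h0]
  | succ k ih =>
    have key : ∀ s ∈ Finset.range (k + 1),
        (-1) ^ (s + 1) * e ((s + 1 : ℕ) * (C - B + (k + 1 : ℕ) - 1)) * GG e (k + 1) (s + 1) *
          (PP e B (s + 1) * PP e (C + (s + 1 : ℕ)) (k + 1 - (s + 1)))
        = (-1) ^ (s + 1) * e ((s + 1 : ℕ) * (C - B + k - 1)) * GG e k (s + 1) *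
          (PP e B (s + 1) * PP e (C + (s + 1 : ℕ)) (k + 1 - (s + 1)))
        + (- (e (C - B + 2 * k) * QQ e B)) * ((-1) ^ s *
          e (s * ((C + 1) - (B + 1) + k - 1)) * GG e k s *
      (PP e (B + 1) s * PP e ((C + 1) + s) (k - s))) := by
      intro s hs
      have f1 : e ((s + 1 : ℕ) * (C - B + k - 1)) =
          e ((s + 1 : ℕ) * (C - B + (k + 1 : ℕ) - 1)) * e (-(s + 1)) := by
        rw [← hadd]; congr 1; push_cast; ring
      have f2 : e (C - B + 2 * k) * e (s * ((C + 1) - (B + 1) + k - 1)) =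
          e ((s + 1 : ℕ) * (C - B + (k + 1 : ℕ) - 1)) * e (k - s) := by
        rw [← hadd, ← hadd]; congr 1; push_cast; ring
      rw [f1, GG, PP_succ', show k + 1 - (s + 1) = k - s by omega,
        show C + ((s + 1 : ℕ) : ℂ) = C + 1 + s by push_cast; ring]
      linear_combination (-(-1) ^ s * GG e k s * QQ e B * (PP e (B + 1) s * PP e ((C + 1) + s) (k - s))) * (-f2)
    rw [Finset.sum_range_succ', Finset.sum_congr rfl key, Finset.sum_add_distrib, ← Finset.mul_sum,
      ih (B + 1) (C + 1)]
    have first : ∑ s ∈ Finset.range (k + 1),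
        (-1) ^ (s + 1) * e ((s + 1 : ℕ) * (C - B + k - 1)) * GG e k (s + 1) *
          (PP e B (s + 1) * PP e (C + (s + 1 : ℕ)) (k + 1 - (s + 1))) +
        (-1) ^ 0 * e ((0 : ℕ) * (C - B + (k + 1 : ℕ) - 1)) * GG e (k + 1) 0 *
          (PP e B 0 * PP e (C + (0 : ℕ)) (k + 1 - 0))
        = QQ e (C + k) * (e (-(k * B)) * PP e (C - B) k) := by
      rw [← ih B C, Finset.mul_sum]
      have := Finset.sum_range_succ' (fun s : ℕ => (-1) ^ s * e (s * (C - B + k - 1)) * GG e k s *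
        (PP e B s * PP e (C + s) (k + 1 - s))) (k + 1)
      have h2 := Finset.sum_range_succ (fun s : ℕ => (-1) ^ s * e (s * (C - B + k - 1)) * GG e k s *
        (PP e B s * PP e (C + s) (k + 1 - s))) (k + 1)
      rw [h2] at this
      simp only [GG_big e k (k + 1) (by omega)] at this
      simp only [mul_zero, zero_mul, add_zero] at this
      have h3 : ∑ s ∈ Finset.range (k + 1), (-1) ^ s * e (s * (C - B + k - 1)) * GG e k s *
        (PP e B s * PP e (C + s) (k + 1 - s)) = ∑ s ∈ Finset.range (k + 1), QQ e (C + k) *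
          ((-1) ^ s * e (s * (C - B + k - 1)) * GG e k s *
        (PP e B s * PP e (C + s) (k - s))) := by
        apply Finset.sum_congr rfl
        intro s hs
        have hs' := Finset.mem_range.1 hs
        rw [show k + 1 - s = (k - s) + 1 by omega, PP_succ,
          show C + (s : ℂ) + ((k - s : ℕ) : ℂ) = C + k by
            rw [Nat.cast_sub (by omega)]; ring]
        ring
      rw [← h3, this, GG_zero, GG_zero]
      simp
    rw [add_right_comm, first, PP_succ, show C + 1 - (B + 1) = C - B by ring]
    unfold QQ
    have g1 : e (C + k) * e (-(k * B)) = e (C - B + 2 * k) * e B * e (-(k * (B + 1))) := by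
      rw [← hadd, ← hadd, ← hadd]; congr 1; ring
    have g2 : e (-(C + k)) * e (-(k * B)) = e (-((k + 1 : ℕ) * B)) * e (-(C - B + k)) := by
      rw [← hadd, ← hadd]; congr 1; push_cast; ring
    have g3 : e (C - B + 2 * k) * e (-B) * e (-(k * (B + 1)))
       = e (-((k + 1 : ℕ) * B)) * e (C - B + k) := by
      rw [← hadd, ← hadd, ← hadd]; congr 1; push_cast; ring
    linear_combination PP e (C - B) k * (g1 - g2 + g3)

/-- Gaussian binomial via factorials -/
def bq (n k s : ℕ) : ℂ := qfac n k / (qfac n s * qfac n (k - s))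

lemma PP_xic (x : ℂ) (m : ℕ) : PP (xic n) x m = UU n x m := rfl

lemma PP_xic_neg (x : ℂ) (m : ℕ) : PP (fun y => xic n (-y)) x m = (-1) ^ m * UU n x m := by
  unfold PP UU QQ
  rw [← Finset.card_range m, ← Finset.prod_const, Finset.card_range, ← Finset.prod_mul_distrib]
  apply Finset.prod_congr rfl
  intro j hj
  unfold qn; simp only [neg_neg]; ring

lemma m1sq (m : ℕ) : ((-1 : ℂ) ^ m) * (-1) ^ m = 1 := by
  rw [← mul_pow]; simp

lemma GG_plus (hn : n ≠ 0) {k s : ℕ} (hk : k < n) (hs : s ≤ k) : GG (xic n) k s = bq n k s := by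
  have h := GG_fac (xic n) xic_zero xic_add s (k - s)
  rw [show s + (k - s) = k by omega] at h
  simp only [PP_xic, ← qfac_eq] at h
  have h1 := qfac_ne hn (show s < n by omega)
  have h2 := qfac_ne hn (show k - s < n by omega)
  unfold bq
  rw [eq_div_iff (mul_ne_zero h1 h2), h]

lemma GG_minus (hn : n ≠ 0) {k s : ℕ} (hk : k < n) (hs : s ≤ k) :
    GG (fun y => xic n (-y)) k s = bq n k s := by
  have h := GG_fac (fun y => xic n (-y)) (by simp [xic_zero])
    (fun x y => by rw [neg_add, xic_add]) s (k - s)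
  rw [show s + (k - s) = k by omega] at h
  simp only [PP_xic_neg, ← qfac_eq] at h
  have h1 := qfac_ne hn (show s < n by omega)
  have h2 := qfac_ne hn (show k - s < n by omega)
  have hsgn : (-1 : ℂ) ^ k = (-1) ^ s * (-1) ^ (k - s) := by rw [← pow_add]; congr 1; omega
  unfold bq
  rw [eq_div_iff (mul_ne_zero h1 h2)]
  rw [hsgn] at h
  have h3 : ((-1 : ℂ) ^ s * (-1) ^ (k - s)) ≠ 0 := by simp
  apply mul_left_cancel₀ h3
  rw [← h]; ring

lemma VP (hn : n ≠ 0) {k : ℕ} (hk : k < n) (B C : ℂ) :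
    ∑ s ∈ Finset.range (k + 1), (-1) ^ s * xic n (s * (C - B + k - 1)) * bq n k s *
      (UU n B s * UU n (C + s) (k - s)) = xic n (-(k * B)) * UU n (C - B) k := by
  rw [← PP_xic (n := n) (C - B), ← vander (xic n) xic_zero xic_add k B C]
  apply Finset.sum_congr rfl
  intro s hs
  have := Finset.mem_range.1 hs
  rw [GG_plus hn hk (by omega)]; rfl

lemma VM (hn : n ≠ 0) {k : ℕ} (hk : k < n) (B C : ℂ) :
    ∑ s ∈ Finset.range (k + 1), (-1) ^ s * xic n (-(s * (C - B + k - 1))) * bq n k s *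
      (UU n B s * UU n (C + s) (k - s)) = xic n (k * B) * UU n (C - B) k := by
  have h := vander (fun y => xic n (-y)) (by simp [xic_zero])
    (fun x y => by rw [neg_add, xic_add]) k B C
  have h3 : (-1 : ℂ) ^ k ≠ 0 := by simp
  apply mul_left_cancel₀ h3
  rw [Finset.mul_sum]
  simp only [PP_xic_neg, neg_neg] at h
  rw [show (-1) ^ k * (xic n (k * B) * UU n (C - B) k) =
    xic n (k * B) * ((-1) ^ k * UU n (C - B) k) by ring, ← h]
  apply Finset.sum_congr rfl
  intro s hs
  have := Finset.mem_range.1 hs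
  have hsgn : (-1 : ℂ) ^ k = (-1) ^ s * (-1) ^ (k - s) := by rw [← pow_add]; congr 1; omega
  rw [GG_minus hn hk (by omega), hsgn]; ring

lemma qbin_nat (hn : n ≠ 0) {k s : ℕ} (hk : k < n) (hs : s ≤ k) (x y : ℂ) (hx : x = k)
    (hy : y = k - s) : qbin n x y = bq n k s := by
  rw [qbin_eq x y s (by omega) (by rw [hx, hy]; ring), hx, DD_eq_UU (k : ℂ) (1 + (k - s : ℕ)) s
    (by rw [Nat.cast_sub hs]; ring)]
  have h2 := qfac_ne hn (show k - s < n by omega)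
  have h1 := qfac_ne hn (show s < n by omega)
  have : qfac n k = qfac n (k - s) * UU n (1 + (k - s : ℕ)) s := by
    rw [qfac_eq, qfac_eq, ← UU_add _ _ _ _ rfl]; congr 1; omega
  unfold bq
  rw [this]; field_simp

lemma qbin_big (hn : n ≠ 0) {k m : ℕ} (hm : m < n) (hs : k < m) (x y : ℂ) (hx : x = k)
    (hy : y = k - m) : qbin n x y = 0 := by
  rw [qbin_eq x y m hm (by rw [hx, hy]; ring), hx]
  have : DD n k m = 0 := by
    unfold DD
    apply Finset.prod_eq_zero (Finset.mem_range.2 hs)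
    simp [qn]
  rw [this]; simp

lemma bq_symm {k s : ℕ} (hs : s ≤ k) : bq n k (k - s) = bq n k s := by
  unfold bq
  rw [show k - (k - s) = s by omega, mul_comm]

lemma term_b (x : ℂ) (hn : n ≠ 0) (t s : ℕ) (h : t + s < n) (p q : ℂ) (hp : p = x + s)
    (hq : q = x - t) :
    qbin n p q = (-1) ^ t * UU n (-x) t * UU n (x + 1) s / qfac n (t + s) := by
  rw [qbin_eq p q (t + s) h (by rw [hp, hq]; push_cast; ring),
    DD_eq_UU p (x - t + 1) (t + s) (by rw [hp]; push_cast; ring),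
    UU_add (x - t + 1) (x + 1) t s (by ring), ← DD_eq_UU x (x - t + 1) t rfl, DD_neg]

lemma term_c (hn : n ≠ 0) (c : ℂ) (k N s t : ℕ) (h : k + N + 1 = n) (hs : s ≤ k) (ht : t ≤ N)
    (p q : ℂ) (hp : p = 2 * n - 2 - 2 * c - s) (hq : q = n - 1 - 2 * c + t) :
    qbin n p q = (-1) ^ ((k - s) + (N - t)) * (UU n (2 * c + 2 + s) (k - s) *
      UU n (- (2 * c) + t) (N - t)) / qfac n ((k - s) + (N - t)) := by
  have hc : (n : ℂ) = k + N + 1 := by exact_mod_cast h.symm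
  rw [qbin_eq p q ((k - s) + (N - t)) (by omega)
    (by rw [hp, hq]; push_cast [Nat.cast_sub hs, Nat.cast_sub ht]; rw [hc]; ring), DD_neg]
  have h2 : ∀ (x y : ℂ) (m : ℕ), x = y + 2 * n → UU n x m = UU n y m := by
    intro x y m hxy
    rw [show x = (y + n) + n by rw [hxy]; ring, UU_add_n hn, UU_add_n hn, ← mul_assoc, m1sq, one_mul]
  rw [← h2 (2 * c + 2 + s) (-p) _ (by rw [hp]; ring),
    UU_add (2 * c + 2 + s) (2 * c + 2 + k) _ _ (by rw [Nat.cast_sub hs]; ring),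
    ← DD_eq_UU (2 * c + n - t) (2 * c + 2 + k) (N - t)
      (by rw [Nat.cast_sub ht, hc]; ring), DD_neg]
  have h3 := UU_add_n hn (-(2 * c + n - t)) (N - t)
  rw [← h3]
  congr 4; ring

lemma pref (hn : n ≠ 0) (a : ℂ) (m : ℕ) (hm : m < n) (p q : ℂ) (hp : p = 2 * n - 2 - 2 * a)
    (hq : q = p - m) : qbin n p q = (-1) ^ m * UU n (2 * a + 2) m / qfac n m := by
  rw [qbin_eq p q m hm (by rw [hq]; ring), DD_neg]
  rw [show 2 * a + 2 = (-p + n) + n by rw [hp]; ring, UU_add_n hn, UU_add_n hn,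
    ← mul_assoc ((-1) ^ m) ((-1) ^ m), m1sq, one_mul]

lemma CG1 (hn : n ≠ 0) (a b c : ℂ) (k N t : ℕ) (h : k + N + 1 = n) (ht : t ≤ N)
    (habc : a + b - c = k) :
    CG n b ((n : ℂ) - 1 - c) ((n : ℂ) - 1 - a) (k + t) (n - 1 - t) (n - 1) =
    Complex.exp (Real.pi * Complex.I * (-k) / 2) * (-1) ^ t *
    xic n (((n - 1 - t) * (n - 2 * c + t) - (k + t) * (2 * b - (k + t) + 1)) / 2) *
    ((-1) ^ (k + N) * UU n (2 * a + 2) (k + N) / qfac n (k + N))⁻¹ *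
    ((-1) ^ N * UU n (2 * a + 2) N / qfac n N) *
    ∑ s ∈ Finset.range (k + 1), (-1) ^ (t + s) *
      xic n ((2 * (t + s) - (k + N)) * (n - 2 * a) / 2) * bq n k s *
      ((-1) ^ t * UU n (k - 2 * b) t * UU n (2 * b - k + 1) s / qfac n (t + s)) *
      ((-1) ^ ((k - s) + (N - t)) * (UU n (2 * c + 2 + s) (k - s) *
      UU n (- (2 * c) + t) (N - t)) / qfac n ((k - s) + (N - t))) := by
  have hc : (n : ℂ) = k + N + 1 := by exact_mod_cast h.symm
  have hcc : c = a + b - k := by rw [← habc]; ring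
  have c1 : ((n - 1 : ℕ) : ℂ) = k + N := by rw [← h]; push_cast; simp
  have c2 : ((n - 1 - t : ℕ) : ℂ) = k + N - t := by
    rw [← h]; rw [Nat.cast_sub (by omega)]; push_cast; simp
  unfold CG
  congr 1
  · congr 1
    · congr 1
      · congr 1
        · congr 1
          · congr 2; rw [hcc]; ring
          · rw [show ((n - 1 - t : ℕ) : ℤ) - ((n - 1 : ℕ) : ℤ) = -(t : ℤ) by omega, zpow_neg,
              zpow_natCast, ← inv_pow]
            norm_num
        · congr 2; rw [c2, hc]; push_cast; ring
      · rw [pref hn a (k + N) (by omega) _ _ (by ring) (by rw [c1]; push_cast; ring)]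
    · rw [pref hn a N (by omega) _ _ (by ring) (by rw [hcc, hc]; ring)]
  · rw [show n - 1 + 1 = t + ((k + 1) + (N - t)) by omega, Finset.sum_range_add, Finset.sum_range_add]
    rw [Finset.sum_eq_zero, Finset.sum_eq_zero (s := Finset.range (N - t)), zero_add, add_zero]
    · apply Finset.sum_congr rfl
      intro s hs
      have hs' := Finset.mem_range.1 hs
      congr 1
      · congr 1
        · congr 1
          · congr 2; rw [c1, hc]; push_cast; ring
          · exact qbin_nat hn (by omega) (by omega) _ _ (by rw [hcc]; ring) (by push_cast; ring)
        · rw [term_b (2 * b - k) hn t s (by omega) _ _ (by push_cast; ring) (by push_cast; ring),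
            neg_sub]
      · exact term_c hn c k N s t h (by omega) ht _ _ (by rw [c1, c2, hc]; push_cast; ring)
          (by rw [c2, hc]; ring)
    · intro r hr
      have hr' := Finset.mem_range.1 hr
      rw [qbin_big hn (k := k) (m := k + 1 + r) (by omega) (by omega) _ _ (by rw [hcc]; ring)
        (by push_cast; ring)]
      ring
    · intro z hz
      have hz' := Finset.mem_range.1 hz
      rw [qbin_neg _ _ (t - z - 1) (by
        rw [Nat.sub_sub, Nat.cast_sub (by omega), hcc]; push_cast; ring)]
      ring

lemma CG2 (hn : n ≠ 0) (a b c : ℂ) (k N t : ℕ) (h : k + N + 1 = n) (ht : t ≤ N)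
    (habc : a + b - c = k) :
    CG n c ((n : ℂ) - 1 - b) a t (n - 1 - k - t) 0 =
    Complex.exp (Real.pi * Complex.I * (-N) / 2) * (-1) ^ (N - t) *
    xic n (((N - t) * (n - 2 * b + k + t) - t * (2 * c - t + 1)) / 2) *
    (UU n (2 * a - k + 1) k / qfac n k) * bq n N t := by
  have hc : (n : ℂ) = k + N + 1 := by exact_mod_cast h.symm
  have hcc : c = a + b - k := by rw [← habc]; ring
  have c2 : ((n - 1 - k - t : ℕ) : ℂ) = N - t := by
    rw [← Nat.cast_sub ht]; congr 1; omega
  unfold CG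
  rw [zero_add, Finset.sum_range_one, qbin_self hn (2 * a) _ (by simp),
    qbin_self hn (2 * c - t + (0 : ℕ)) _ (by simp),
    qbin_self hn _ (2 * (n - 1 - b) - ((n - 1 - k - t : ℕ) : ℂ)) (by simp),
    qbin_eq (2 * a) _ k (by omega) (by rw [hcc]; ring), DD_eq_UU _ _ _ rfl,
    qbin_nat hn (k := N) (s := N - t) (by omega) (by omega) _ _ (by rw [hcc, hc]; ring)
      (by rw [Nat.cast_sub ht]; simp), bq_symm ht]
  rw [show ((n - 1 - k - t : ℕ) : ℤ) - ((0 : ℕ) : ℤ) = ((N - t : ℕ) : ℤ) by omega, zpow_natCast, c2]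
  simp only [inv_one, mul_one, pow_zero, one_mul, Nat.cast_zero, mul_zero, sub_zero, zero_mul, zero_div,
    xic_zero]
  have r1 : a - c - ((n : ℂ) - 1 - b) = -N := by rw [hcc, hc]; ring
  have r2 : 2 * ((n : ℂ) - 1 - b) - (N - t) + 1 = n - 2 * b + k + t := by rw [hc]; ring
  rw [r1, r2]

lemma term_sign (N k s t : ℕ) (ht : t ≤ N) (hs : s ≤ k) :
    (-1 : ℂ) ^ t * (-1) ^ (N - t) * (-1) ^ (t + s) * (-1) ^ t * (-1) ^ ((k - s) + (N - t)) * (-1) ^ s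
      = (-1) ^ k * (-1) ^ s * (-1) ^ t := by
  obtain ⟨p, rfl⟩ := Nat.exists_eq_add_of_le ht
  obtain ⟨q, rfl⟩ := Nat.exists_eq_add_of_le hs
  simp only [Nat.add_sub_cancel_left, ← pow_add]
  rw [show t + p + (t + s) + t + (q + p) + s = (s + q + s + t) + 2 * (p + t) by ring, pow_add,
    pow_mul]
  simp

lemma term_phase (hn : n ≠ 0) (a b c : ℂ) (k N t s : ℕ) (hc : (n : ℂ) = k + N + 1)
    (hcc : c = a + b - k) :
    xic n (((n - 1 - t) * (n - 2 * c + t) - (k + t) * (2 * b - (k + t) + 1)) / 2) *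
    xic n ((2 * (t + s) - (k + N)) * (n - 2 * a) / 2) *
    xic n (((N - t) * (n - 2 * b + k + t) - t * (2 * c - t + 1)) / 2) =
    (-1) ^ s * xic n (((n - 1) * (2 * a - 2 * c) - k * (2 * b - k + 1) + N * (n - 2 * b + k)) / 2) *
    xic n (-(s * ((2 * c + 2) - (2 * b - k + 1) + k - 1))) *
    xic n (t * (-(2 * c) - (k - 2 * b) + N - 1)) := by
  rw [← xic_mul_n hn s]
  simp only [← xic_add]
  congr 1
  rw [hcc, hc]; ring

lemma phase_const (hn : n ≠ 0) (a b c : ℂ) (k N : ℕ) (hc : (n : ℂ) = k + N + 1)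
    (hcc : c = a + b - k) :
    Complex.exp (Real.pi * Complex.I * (-k) / 2) * Complex.exp (Real.pi * Complex.I * (-N) / 2) *
    xic n (((n - 1) * (2 * a - 2 * c) - k * (2 * b - k + 1) + N * (n - 2 * b + k)) / 2) *
    xic n (k * (2 * b - k + 1)) * xic n (-(N * (k - 2 * b))) = 1 := by
  have hn' : (n : ℂ) ≠ 0 := by exact_mod_cast hn
  have h1 : Complex.exp (Real.pi * Complex.I * (-k) / 2) = xic n (-(k * n / 2)) := by
    unfold xic; congr 1; field_simp
  have h2 : Complex.exp (Real.pi * Complex.I * (-N) / 2) = xic n (-(N * n / 2)) := by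
    unfold xic; congr 1; field_simp
  rw [h1, h2]
  simp only [← xic_add]
  refine Eq.trans ?_ (xic_zero (n := n))
  congr 1
  rw [hcc, hc]; ring

lemma UU_ne (hn : n ≠ 0) (a : ℂ) (ha : NotHalfInt a) (m : ℕ) : UU n (2 * a + 2) m ≠ 0 := by
  unfold UU
  rw [Finset.prod_ne_zero_iff]
  intro j _
  apply qn_ne hn
  intro i hi
  apply ha (i * n - 2 - j)
  push_cast
  linear_combination hi / 2

lemma alg1 (z1 z2 z3 z4 z5 z6 x1 x2 x3 x4 x5 u1 u2 u3 u4 b1 b2 m1 m2 m3 m4 f1 f2 m5 m6 : ℂ)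
    (g1 : f1 ≠ 0) (g2 : f2 ≠ 0) (hs1 : m5 * m2 * m1 * m5 * m3 * m6 = m4 * m6 * m5)
    (hs2 : x1 * x2 * x3 = m6 * z6 * x4 * x5) :
    z1 * m5 * x1 * z3 * z4 * (m1 * x2 * b1 * (m5 * u1 * u2 / f1) * (m3 * (u3 * u4) / f2)) *
      (z2 * m2 * x3 * z5 * b2) =
    z1 * z2 * z3 * z4 * z5 * m4 * z6 / (f1 * f2) * (m6 * x4 * b1 * (u2 * u3)) *
      (m5 * x5 * b2 * (u1 * u4)) := by
  calc _ = (m5 * m2 * m1 * m5 * m3) * (x1 * x2 * x3) * (z1 * z2 * z3 * z4 * z5 * u1 * u2 * u3 * u4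
          * b1 * b2) / (f1 * f2) := by ring
      _ = (m5 * m2 * m1 * m5 * m3 * m6) * (z6 * x4 * x5) * (z1 * z2 * z3 * z4 * z5 * u1 * u2 * u3 *
          u4 * b1 * b2) / (f1 * f2) := by rw [hs2]; ring
      _ = _ := by rw [hs1]; ring

lemma alg2 (e1 e2 PH x1 x2 U V W X fn fk fN mk mN : ℂ) {mn : ℂ} (hX : X ≠ 0) (hfn : fn ≠ 0)
    (hfk : fk ≠ 0) (hfN : fN ≠ 0) (hfac : fk * fN = fn) (hph : e1 * e2 * PH * x1 * x2 = 1)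
    (hEP : U * V = mk * X) (hST : W * V = mn * X) (q1 : mk * mk = 1) (q2 : mN * mN = 1)
    (q3 : mn * mn = 1) :
    e1 * e2 * (mn * fn / X) * (mN * U / fN) * (V / fk) * mk * PH / fn * (x1 * V) *
      (x2 * (mN * W)) = X / fn := by
  calc _ = (e1 * e2 * PH * x1 * x2) * (U * V) * (W * V) * (mN * mN) * (mn * mk) /
        (X * (fk * fN)) := by field_simp
    _ = ((mk * mk) * (mn * mn)) * X * X / (X * fn) := by rw [hph, hEP, hST, q2, hfac]; ring
    _ = _ := by rw [q1, q3]; field_simp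

lemma theta_core (hn : n ≠ 0) (a b c : ℂ) (ha : NotHalfInt a) (k N : ℕ) (h : k + N + 1 = n)
    (habc : a + b - c = k) :
    ∑ t ∈ Finset.range (N + 1),
        CG n b ((n : ℂ) - 1 - c) ((n : ℂ) - 1 - a) (k + t) (n - 1 - t) (n - 1) *
          CG n c ((n : ℂ) - 1 - b) a t (n - 1 - k - t) 0
      = qbin n (2 * a + (n : ℂ)) (2 * a + 1) := by
  have hc : (n : ℂ) = k + N + 1 := by exact_mod_cast h.symm
  have hcc : c = a + b - k := by rw [← habc]; ring
  have fk := qfac_ne hn (show k < n by omega)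
  have fN := qfac_ne hn (show N < n by omega)
  have fn := qfac_ne hn (show k + N < n by omega)
  have hX := UU_ne hn a ha (k + N)
  set X := UU n (2 * a + 2) (k + N) with hXdef
  set PH := xic n (((n - 1) * (2 * a - 2 * c) - k * (2 * b - k + 1) + N * (n - 2 * b + k)) / 2)
    with hPH
  set e1 := Complex.exp (Real.pi * Complex.I * (-k) / 2) with he1
  set e2 := Complex.exp (Real.pi * Complex.I * (-N) / 2) with he2
  set D := ((-1) ^ (k + N) * X / qfac n (k + N)) with hD
  set E := ((-1) ^ N * UU n (2 * a + 2) N / qfac n N) with hE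
  set P := (UU n (2 * a - k + 1) k / qfac n k) with hP
  have step : ∀ t ∈ Finset.range (N + 1),
      CG n b ((n : ℂ) - 1 - c) ((n : ℂ) - 1 - a) (k + t) (n - 1 - t) (n - 1) *
          CG n c ((n : ℂ) - 1 - b) a t (n - 1 - k - t) 0 =
      (e1 * e2 * D⁻¹ * E * P * (-1) ^ k * PH / qfac n (k + N)) *
      (xic n (k * (2 * b - k + 1)) * UU n ((2 * c + 2) - (2 * b - k + 1)) k) *
      ((-1) ^ t * xic n (t * (-(2 * c) - (k - 2 * b) + N - 1)) * bq n N t *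
      (UU n (k - 2 * b) t * UU n (-(2 * c) + t) (N - t))) := by
    intro t ht
    have ht' := Finset.mem_range.1 ht
    rw [CG1 hn a b c k N t h (by omega) habc, CG2 hn a b c k N t h (by omega) habc,
      ← VM hn (show k < n by omega) (2 * b - k + 1) (2 * c + 2)]
    simp only [Finset.mul_sum, Finset.sum_mul]
    apply Finset.sum_congr rfl
    intro s hs
    have hs' := Finset.mem_range.1 hs
    have hf : qfac n (k + N) = qfac n (t + s) * qfac n ((k - s) + (N - t)) := by
      rw [qfac_compl hn _ _ (by omega)]; congr 1; omega
    have hs1 := term_sign N k s t (by omega) (by omega)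
    have hs2 := term_phase hn a b c k N t s hc hcc
    rw [← he1, ← he2, ← hXdef, ← hD, ← hE, ← hP]
    rw [← hPH] at hs2
    rw [hf]
    generalize e1 = z1, e2 = z2, D⁻¹ = z3, E = z4, P = z5, PH = z6,
      xic n (((n - 1 - t) * (n - 2 * c + t) - (k + t) * (2 * b - (k + t) + 1)) / 2) = x1,
      xic n ((2 * (t + s) - (k + N)) * (n - 2 * a) / 2) = x2,
      xic n (((N - t) * (n - 2 * b + k + t) - t * (2 * c - t + 1)) / 2) = x3,
      xic n (-(s * ((2 * c + 2) - (2 * b - k + 1) + k - 1))) = x4,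
      xic n (t * (-(2 * c) - (k - 2 * b) + N - 1)) = x5,
      UU n (k - 2 * b) t = u1, UU n (2 * b - k + 1) s = u2, UU n (2 * c + 2 + s) (k - s) = u3,
      UU n (- (2 * c) + t) (N - t) = u4, bq n k s = b1, bq n N t = b2 at hs2 ⊢
    generalize (-1 : ℂ) ^ (t + s) = m1, (-1 : ℂ) ^ (N - t) = m2,
      (-1 : ℂ) ^ ((k - s) + (N - t)) = m3, (-1 : ℂ) ^ k = m4 at hs1 ⊢
    have g1 := qfac_ne hn (show t + s < n by omega)
    have g2 := qfac_ne hn (show (k - s) + (N - t) < n by omega)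
    generalize qfac n (t + s) = f1, qfac n ((k - s) + (N - t)) = f2 at g1 g2 ⊢
    generalize (-1 : ℂ) ^ t = m5, (-1 : ℂ) ^ s = m6 at hs1 hs2 ⊢
    exact alg1 _ _ _ _ _ _ _ _ _ _ _ _ _ _ _ _ _ _ _ _ _ _ _ _ _ g1 g2 hs1 hs2
  rw [Finset.sum_congr rfl step, ← Finset.mul_sum, VP hn (show N < n by omega)]
  have hph := phase_const hn a b c k N hc hcc
  rw [← he1, ← he2, ← hPH] at hph
  have hr : qbin n (2 * a + (n : ℂ)) (2 * a + 1) = X / qfac n (k + N) := by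
    rw [qbin_eq _ _ (k + N) (by omega) (by rw [hc]; push_cast; ring),
      DD_eq_UU _ (2 * a + 2) _ (by rw [hc]; push_cast; ring)]
  have hS : UU n (2 * c + 2 - (2 * b - k + 1)) k = UU n (2 * a - k + 1) k := by
    congr 1; rw [hcc]; ring
  have hT : UU n (-(2 * c) - (k - 2 * b)) N = (-1) ^ N * UU n (2 * a - k - N + 1) N := by
    rw [← DD_eq_UU (2 * a - k) _ N rfl, DD_neg, ← mul_assoc, m1sq, one_mul]
    congr 1; rw [hcc]; ring
  have hST : UU n (2 * a - k - N + 1) N * UU n (2 * a - k + 1) k = (-1) ^ (k + N) * X := by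
    rw [← UU_add _ _ _ _ (by ring), hXdef,
      show 2 * a + 2 = (2 * a - k - N + 1) + n by rw [hc]; ring, UU_add_n hn, ← mul_assoc, m1sq,
      one_mul, add_comm N k]
  have hEP : UU n (2 * a + 2) N * UU n (2 * a - k + 1) k = (-1) ^ k * X := by
    rw [hXdef, add_comm k N, UU_add (2 * a + 2) (2 * a - k + 1 + n) N k (by rw [hc]; ring),
      UU_add_n hn]
    linear_combination (-(UU n (2 * a + 2) N * UU n (2 * a - k + 1) k)) * m1sq k
  have hfac := qfac_compl hn k N h
  rw [hr, hS, hT]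
  have hDi : D⁻¹ = (-1) ^ (k + N) * qfac n (k + N) / X := by
    rw [hD, inv_div, div_eq_div_iff (mul_ne_zero (by simp) hX) hX]
    linear_combination (-(qfac n (k + N) * X)) * m1sq (k + N)
  rw [hDi, hE, hP]
  have q1 := m1sq k
  have q2 := m1sq N
  have q3 := m1sq (k + N)
  exact alg2 _ _ _ _ _ _ _ _ _ _ _ _ _ _ hX fn fk fN hfac hph hEP hST q1 q2 q3

end theta

theorem theta_graph_value (n : ℕ) (hn : 2 ≤ n) (a b c : ℂ)
    (ha : NotHalfInt a) (hb : NotHalfInt b) (hc : NotHalfInt c)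
    (k : ℕ) (hk : k ≤ n - 1) (habc : a + b - c = (k : ℂ)) :
    ∑ t ∈ Finset.range (n - k),
        CG n b ((n : ℂ) - 1 - c) ((n : ℂ) - 1 - a) (k + t) (n - 1 - t) (n - 1) *
          CG n c ((n : ℂ) - 1 - b) a t (n - 1 - k - t) 0
      = qbin n (2 * a + (n : ℂ)) (2 * a + 1) := by
  obtain ⟨N, hN⟩ : ∃ N, k + N + 1 = n := ⟨n - 1 - k, by omega⟩
  rw [show n - k = N + 1 by omega]
  exact theta_core (by omega) a b c ha k N hN habc

end
end
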